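/- In the MM-SPIR model (with all constraints), for every size-P subset 𝒫 of {1,…,K}: N·P·L ≤ (N−1)·H(A_1^{[𝒫]},…,A_N^{[𝒫]} | F). -/

import Mathlib

open Finset

namespace MMSPIR

variable {Ω : Type} [Fintype Ω]

/-- Probability that the random variable `X` takes the value `v`,
under the weight function `p` on the finite sample space `Ω`. -/
noncomputable def prob (p : Ω → ℝ) {V : Type} [DecidableEq V] (X : Ω → V) (v : V) : ℝ :=
  ∑ ω ∈ Finset.univ.filter (fun ω => X ω = v), p ω

/-- Shannon entropy of `X`, with logarithm taken to base `q`. -/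
noncomputable def ent (q : ℕ) (p : Ω → ℝ) {V : Type} [Fintype V] [DecidableEq V]
    (X : Ω → V) : ℝ :=
  -∑ v : V, prob p X v * Real.logb q (prob p X v)

/-- Conditional entropy `H(X | Y)`, base `q`. -/
noncomputable def cent (q : ℕ) (p : Ω → ℝ) {V W : Type} [Fintype V] [DecidableEq V]
    [Fintype W] [DecidableEq W] (X : Ω → V) (Y : Ω → W) : ℝ :=
  ent q p (fun ω => (X ω, Y ω)) - ent q p Y

/-- Mutual information `I(X ; Y)`, base `q`. -/
noncomputable def mi (q : ℕ) (p : Ω → ℝ) {V W : Type} [Fintype V] [DecidableEq V]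
    [Fintype W] [DecidableEq W] (X : Ω → V) (Y : Ω → W) : ℝ :=
  ent q p X + ent q p Y - ent q p (fun ω => (X ω, Y ω))

/-- Conditional mutual information `I(X ; Y | Z)`, base `q`. -/
noncomputable def cmi (q : ℕ) (p : Ω → ℝ) {U V W : Type} [Fintype U] [DecidableEq U]
    [Fintype V] [DecidableEq V] [Fintype W] [DecidableEq W]
    (X : Ω → U) (Y : Ω → V) (Z : Ω → W) : ℝ :=
  cent q p X Z + cent q p Y Z - cent q p (fun ω => (X ω, Y ω)) Z

/-- `X` and `Y` have the same distribution. -/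
def IdentDist (p : Ω → ℝ) {V : Type} [DecidableEq V] (X Y : Ω → V) : Prop :=
  ∀ v, prob p X v = prob p Y v

section Helpers

set_option linter.unusedSectionVars false

variable {U V X Y Z : Type} [Fintype U] [DecidableEq U] [Fintype V] [DecidableEq V]
  [Fintype X] [DecidableEq X] [Fintype Y] [DecidableEq Y] [Fintype Z] [DecidableEq Z]

theorem sum_comp_prob (p : Ω → ℝ) (f : Ω → X) (g : X → ℝ) :
    ∑ x, prob p f x * g x = ∑ ω, p ω * g (f ω) := by
  classical
  rw [← Finset.sum_fiberwise (s := Finset.univ) (g := f)]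
  refine Finset.sum_congr rfl fun x _ => ?_
  rw [prob, Finset.sum_mul]
  refine Finset.sum_congr rfl fun ω hω => ?_
  rw [(Finset.mem_filter.1 hω).2]

theorem ent_eq (q : ℕ) (p : Ω → ℝ) (f : Ω → X) :
    ent q p f = -∑ ω, p ω * Real.logb q (prob p f (f ω)) := by
  rw [ent, sum_comp_prob p f (fun x => Real.logb q (prob p f x))]

theorem prob_nonneg (p : Ω → ℝ) (hp0 : ∀ ω, 0 ≤ p ω) (f : Ω → X) (x : X) : 0 ≤ prob p f x :=
  Finset.sum_nonneg fun ω _ => hp0 ω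

theorem le_prob (p : Ω → ℝ) (hp0 : ∀ ω, 0 ≤ p ω) (f : Ω → X) (ω : Ω) : p ω ≤ prob p f (f ω) :=
  Finset.single_le_sum (f := p) (fun i _ => hp0 i) (by simp)

theorem prob_le (p : Ω → ℝ) (hp0 : ∀ ω, 0 ≤ p ω) (f : Ω → X) (g : Ω → Y)
    (h : ∀ ω ω', f ω = f ω' → g ω = g ω') (ω : Ω) : prob p f (f ω) ≤ prob p g (g ω) := by
  unfold prob
  refine Finset.sum_le_sum_of_subset_of_nonneg ?_ (fun i _ _ => hp0 i)
  intro a ha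
  simp only [Finset.mem_filter, Finset.mem_univ, true_and] at ha ⊢
  exact h _ _ ha

/-- Monotonicity of entropy: if `f` determines `g`, then `H(g) ≤ H(f)`. -/
theorem ent_mono (q : ℕ) (hq : 1 < q) (p : Ω → ℝ) (hp0 : ∀ ω, 0 ≤ p ω) (g : Ω → Y) (f : Ω → X)
    (h : ∀ ω ω', f ω = f ω' → g ω = g ω') : ent q p g ≤ ent q p f := by
  rw [ent_eq, ent_eq, neg_le_neg_iff]
  refine Finset.sum_le_sum fun ω _ => ?_
  rcases (hp0 ω).eq_or_lt with h0 | h0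
  · simp [← h0]
  · exact mul_le_mul_of_nonneg_left
      (Real.logb_le_logb_of_le (by exact_mod_cast hq) (h0.trans_le (le_prob p hp0 f ω))
        (prob_le p hp0 f g h ω)) h0.le

theorem sum_prob_pair (p : Ω → ℝ) (f : Ω → X) (g : Ω → Z) (z : Z) :
    ∑ x, prob p (fun ω => (f ω, g ω)) (x, z) = prob p g z := by
  unfold prob
  rw [← Finset.sum_fiberwise (s := Finset.univ.filter fun ω => g ω = z) (g := f)]
  refine Finset.sum_congr rfl fun x _ => ?_
  refine Finset.sum_congr ?_ fun _ _ => rfl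
  ext ω
  simp [and_comm]

theorem sum_prob (p : Ω → ℝ) (f : Ω → X) : ∑ x, prob p f x = ∑ ω, p ω := by
  simpa using sum_comp_prob p f (fun _ => 1)

theorem sum_div_prob_le (p : Ω → ℝ) (f : Ω → X) (g : X → ℝ)
    (hg : ∀ x, 0 ≤ g x) : ∑ ω, p ω * (g (f ω) / prob p f (f ω)) ≤ ∑ x, g x := by
  rw [← sum_comp_prob p f (fun x => g x / prob p f x)]
  refine Finset.sum_le_sum fun x _ => ?_
  by_cases h : prob p f x = 0
  · simp [h, hg x]
  · rw [mul_div_cancel₀ _ h]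

/-- Submodularity in the classical form. -/
theorem submod (q : ℕ) (hq : 1 < q) (p : Ω → ℝ) (hp0 : ∀ ω, 0 ≤ p ω)
    (f : Ω → X) (g : Ω → Y) (h : Ω → Z) :
    ent q p (fun ω => (f ω, g ω, h ω)) + ent q p h ≤
      ent q p (fun ω => (f ω, h ω)) + ent q p (fun ω => (g ω, h ω)) := by
  have hlq : 0 < Real.log q := Real.log_pos (by exact_mod_cast hq)
  set a := fun ω => (f ω, g ω, h ω) with ha
  set b := fun ω => (f ω, h ω) with hb
  set c := fun ω => (g ω, h ω) with hc
  have key : ∑ ω, p ω * (prob p b (b ω) * prob p c (c ω) / prob p h (h ω) / prob p a (a ω))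
      ≤ ∑ ω, p ω := by
    refine (sum_div_prob_le p a
      (fun t => prob p b (t.1, t.2.2) * prob p c (t.2.1, t.2.2) / prob p h t.2.2) ?_).trans ?_
    · intro t
      exact div_nonneg (mul_nonneg (prob_nonneg p hp0 _ _) (prob_nonneg p hp0 _ _))
        (prob_nonneg p hp0 _ _)
    · rw [← sum_prob p h]
      simp only [Fintype.sum_prod_type]
      have e : ∀ x : X, ∑ y : Y, ∑ z : Z, prob p b (x, z) * prob p c (y, z) / prob p h z =
          ∑ z : Z, prob p b (x, z) * (prob p h z / prob p h z) := by
        intro x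
        rw [Finset.sum_comm]
        refine Finset.sum_congr rfl fun z _ => ?_
        rw [← Finset.sum_div, ← Finset.mul_sum, hc, sum_prob_pair, mul_div_assoc]
      simp only [e]
      rw [Finset.sum_comm]
      refine Finset.sum_le_sum fun z _ => ?_
      rw [← Finset.sum_mul, hb, sum_prob_pair]
      exact mul_le_of_le_one_right (prob_nonneg p hp0 _ _) (div_self_le_one _)
  rw [ent_eq, ent_eq, ent_eq, ent_eq]
  simp only [Real.logb, ← mul_div_assoc, ← Finset.sum_div]
  have main : 0 ≤ ∑ ω, (p ω * Real.log (prob p a (a ω)) + p ω * Real.log (prob p h (h ω))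
      - p ω * Real.log (prob p b (b ω)) - p ω * Real.log (prob p c (c ω))) := by
    have : ∑ ω, (p ω - p ω * (prob p b (b ω) * prob p c (c ω) / prob p h (h ω) / prob p a (a ω)))
      ≤ ∑ ω, (p ω * Real.log (prob p a (a ω)) + p ω * Real.log (prob p h (h ω))
      - p ω * Real.log (prob p b (b ω)) - p ω * Real.log (prob p c (c ω))) := by
      refine Finset.sum_le_sum fun ω _ => ?_
      rcases (hp0 ω).eq_or_lt with h0 | h0
      · simp [← h0]
      have pa := h0.trans_le (le_prob p hp0 a ω)
      have pb := h0.trans_le (le_prob p hp0 b ω)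
      have pc := h0.trans_le (le_prob p hp0 c ω)
      have ph := h0.trans_le (le_prob p hp0 h ω)
      have := Real.log_le_sub_one_of_pos (div_pos (div_pos (mul_pos pb pc) ph) pa)
      rw [Real.log_div (by positivity) pa.ne', Real.log_div (by positivity) ph.ne',
        Real.log_mul pb.ne' pc.ne'] at this
      nlinarith [mul_le_mul_of_nonneg_left this h0.le]
    rw [Finset.sum_sub_distrib] at this
    linarith
  simp only [Finset.sum_sub_distrib, Finset.sum_add_distrib] at main
  have := div_nonneg main hlq.le
  simp only [sub_div, add_div] at this
  linarith

/-- Submodularity in lattice form. -/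
theorem sub4 (q : ℕ) (hq : 1 < q) (p : Ω → ℝ) (hp0 : ∀ ω, 0 ≤ p ω)
    (u : Ω → U) (v : Ω → V) (x : Ω → X) (y : Ω → Y)
    (hu : ∀ ω ω', x ω = x ω' → y ω = y ω' → u ω = u ω')
    (hx : ∀ ω ω', x ω = x ω' → v ω = v ω')
    (hy : ∀ ω ω', y ω = y ω' → v ω = v ω') :
    ent q p u + ent q p v ≤ ent q p x + ent q p y := by
  have h1 := submod q hq p hp0 x y v
  have h2 := ent_mono q hq p hp0 u (fun ω => (x ω, y ω, v ω)) (by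
    intro ω ω' h; simp only [Prod.mk.injEq] at h; exact hu _ _ h.1 h.2.1)
  have h3 := ent_mono q hq p hp0 (fun ω => (x ω, v ω)) x (by
    intro ω ω' h; simp only [Prod.mk.injEq]; exact ⟨h, hx _ _ h⟩)
  have h4 := ent_mono q hq p hp0 (fun ω => (y ω, v ω)) y (by
    intro ω ω' h; simp only [Prod.mk.injEq]; exact ⟨h, hy _ _ h⟩)
  linarith

theorem ent_unit (q : ℕ) (p : Ω → ℝ) (hp1 : (∑ ω, p ω) = 1) :
    ent q p (fun _ => ()) = 0 := by
  simp [ent_eq, prob, hp1]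

/-- Subadditivity. -/
theorem sub3 (q : ℕ) (hq : 1 < q) (p : Ω → ℝ) (hp0 : ∀ ω, 0 ≤ p ω) (hp1 : (∑ ω, p ω) = 1)
    (u : Ω → U) (x : Ω → X) (y : Ω → Y)
    (hu : ∀ ω ω', x ω = x ω' → y ω = y ω' → u ω = u ω') :
    ent q p u ≤ ent q p x + ent q p y := by
  have := sub4 q hq p hp0 u (fun _ => ()) x y hu (fun _ _ _ => rfl) (fun _ _ _ => rfl)
  rwa [ent_unit q p hp1, add_zero] at this

theorem ent_identDist (q : ℕ) (p : Ω → ℝ) (f g : Ω → X) (h : IdentDist p f g) (r : X → Y) :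
    ent q p (fun ω => r (f ω)) = ent q p (fun ω => r (g ω)) := by
  have e : ∀ (f : Ω → X) (y : Y), prob p (fun ω => r (f ω)) y
      = ∑ x, prob p f x * (if r x = y then 1 else 0) := by
    intro f y
    rw [sum_comp_prob p f (fun x => if r x = y then 1 else 0)]
    simp [prob, Finset.sum_filter]
  have e2 : ∀ y, prob p (fun ω => r (f ω)) y = prob p (fun ω => r (g ω)) y := by
    intro y
    rw [e, e]
    exact Finset.sum_congr rfl fun x _ => by rw [h x]
  simp only [ent, e2]

end Helpers

/-- Restriction of a family of random variables to the indices in `T`. -/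
def res {ι X : Type} [DecidableEq ι] (T : Finset ι) (f : ι → Ω → X) (ω : Ω) : ι → Option X :=
  fun k => if k ∈ T then some (f k ω) else none

theorem res_iff {Ω ι X : Type} [DecidableEq ι] (T : Finset ι) (f : ι → Ω → X) (ω ω' : Ω) :
    res T f ω = res T f ω' ↔ ∀ k ∈ T, f k ω = f k ω' := by
  simp only [res, funext_iff]
  refine forall_congr' fun k => ?_
  by_cases h : k ∈ T <;> simp [h]

set_option maxHeartbeats 1000000 in
theorem joint_answer_entropy_lower_bound
    {Ω MT QT AT FT ST : Type}
    [Fintype Ω] [Fintype MT] [DecidableEq MT] [Fintype QT] [DecidableEq QT]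
    [Fintype AT] [DecidableEq AT] [Fintype FT] [DecidableEq FT]
    [Fintype ST] [DecidableEq ST]
    (N K P L q : ℕ) (hN : 2 ≤ N) (hK : 2 ≤ K) (hP1 : 1 ≤ P) (hP2 : P ≤ K - 1)
    (hL : 1 ≤ L) (hq : IsPrimePow q)
    (p : Ω → ℝ) (hp0 : ∀ ω, 0 ≤ p ω) (hp1 : (∑ ω, p ω) = 1)
    (W : Fin K → Ω → MT) (F : Ω → FT) (S : Ω → ST)
    (Q : Finset (Fin K) → Fin N → Ω → QT)
    (A : Finset (Fin K) → Fin N → Ω → AT)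
    (hWk : ∀ k, ent q p (W k) = (L : ℝ))
    (hWall : ent q p (fun ω (k : Fin K) => W k ω) = (K : ℝ) * L)
    (hind : ent q p (fun ω => (F ω, S ω, fun k : Fin K => W k ω)) =
      ent q p F + ent q p S + ent q p (fun ω (k : Fin K) => W k ω))
    (hQdet : ∀ 𝒫₀ : Finset (Fin K), 𝒫₀.card = P →
      cent q p (fun ω (n : Fin N) => Q 𝒫₀ n ω) F = 0)
    (hAdet : ∀ 𝒫₀ : Finset (Fin K), 𝒫₀.card = P → ∀ n : Fin N,
      cent q p (A 𝒫₀ n) (fun ω => (Q 𝒫₀ n ω, (fun k : Fin K => W k ω), S ω)) = 0)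
    (hrel : ∀ 𝒫₀ : Finset (Fin K), 𝒫₀.card = P →
      cent q p (fun ω (k : {x : Fin K // x ∈ 𝒫₀}) => W k.1 ω)
        (fun ω => ((fun n : Fin N => A 𝒫₀ n ω), F ω)) = 0)
    (hupriv : ∀ (n : Fin N) (𝒫₁ 𝒫₂ : Finset (Fin K)), 𝒫₁.card = P → 𝒫₂.card = P →
      IdentDist p
        (fun ω => (Q 𝒫₁ n ω, A 𝒫₁ n ω, (fun k : Fin K => W k ω), S ω))
        (fun ω => (Q 𝒫₂ n ω, A 𝒫₂ n ω, (fun k : Fin K => W k ω), S ω)))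
    (hdpriv : ∀ 𝒫₀ : Finset (Fin K), 𝒫₀.card = P →
      mi q p (fun ω (k : {x : Fin K // x ∈ 𝒫₀ᶜ}) => W k.1 ω)
        (fun ω => ((fun n : Fin N => Q 𝒫₀ n ω), (fun n : Fin N => A 𝒫₀ n ω), F ω)) = 0)
    : ∀ (𝒫₀ : Finset (Fin K)), 𝒫₀.card = P →
      (N : ℝ) * P * L ≤ ((N : ℝ) - 1) * cent q p (fun ω (n : Fin N) => A 𝒫₀ n ω) F := by
  intro P₀ hP₀
  have hq1 : 1 < q := hq.one_lt
  have hPK : P + 1 ≤ K := by omega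
  have hPKr : (P : ℝ) + 1 ≤ K := by exact_mod_cast hPK
  set w : Ω → (Fin K → MT) := fun ω k => W k ω with hw
  -- entropy of sub-tuples of the messages
  have hup : ∀ T : Finset (Fin K), ent q p (res T W) ≤ (T.card : ℝ) * L := by
    intro T
    induction T using Finset.induction_on with
    | empty =>
      have := ent_mono q hq1 p hp0 (res ∅ W) (fun _ => ()) (by
        intro ω ω' _; simp [res_iff])
      rw [ent_unit q p hp1] at this
      simpa using this
    | insert k T hk ih =>
      have := sub3 q hq1 p hp0 hp1 (res (insert k T) W) (res T W) (W k) (by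
        intro ω ω'; simp only [res_iff]; clear * -; grind [Finset.mem_compl])
      rw [hWk] at this
      rw [Finset.card_insert_of_notMem hk]
      push_cast
      linarith
  have hcompl : ∀ T : Finset (Fin K), ((Tᶜ).card : ℝ) = K - T.card := by
    intro T
    have := Finset.card_add_card_compl T
    rw [Fintype.card_fin] at this
    have h2 : (T.card : ℝ) + (Tᶜ.card : ℝ) = K := by exact_mod_cast this
    linarith
  have hlo : ∀ T : Finset (Fin K), (T.card : ℝ) * L ≤ ent q p (res T W) := by
    intro T
    have h1 := sub3 q hq1 p hp0 hp1 w (res T W) (res Tᶜ W) (by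
      intro ω ω'; simp only [res_iff]; simp only [hw, funext_iff]; clear * -; grind [Finset.mem_compl])
    have h2 := hup Tᶜ
    rw [hcompl] at h2
    rw [hWall] at h1
    linarith
  -- each message is independent of everything else seen together with one answer
  have hD : ∀ (n : Fin N) (k : Fin K),
      ent q p (fun ω => (res (Finset.univ.erase k) W ω, A P₀ n ω, Q P₀ n ω)) + L ≤
      ent q p (fun ω => (w ω, A P₀ n ω, Q P₀ n ω)) := by
    intro n k
    obtain ⟨P', hP's, hP'⟩ := Finset.exists_subset_card_eq
      (s := (Finset.univ.erase k : Finset (Fin K))) (n := P) (by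
        rw [Finset.card_erase_of_mem (Finset.mem_univ k)]; simpa using hP2)
    have hk : k ∉ P' := fun h => by simpa using hP's h
    have i1 := ent_identDist q p _ _ (hupriv n P₀ P' hP₀ hP') (fun t => (t.2.2.1, t.2.1, t.1))
    have i2 := ent_identDist q p _ _ (hupriv n P₀ P' hP₀ hP') (fun t =>
      ((fun j => if j ∈ Finset.univ.erase k then some (t.2.2.1 j) else none : Fin K → Option MT),
        t.2.1, t.1))
    change ent q p (fun ω => (w ω, A P₀ n ω, Q P₀ n ω)) =
      ent q p (fun ω => (w ω, A P' n ω, Q P' n ω)) at i1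
    change ent q p (fun ω => (res (Finset.univ.erase k) W ω, A P₀ n ω, Q P₀ n ω)) =
      ent q p (fun ω => (res (Finset.univ.erase k) W ω, A P' n ω, Q P' n ω)) at i2
    rw [i1, i2]
    set G := fun ω => ((fun n : Fin N => Q P' n ω), (fun n : Fin N => A P' n ω), F ω) with hG
    have d := hdpriv P' hP'
    have r := hrel P' hP'
    unfold mi at d
    unfold cent at r
    have s1 := sub4 q hq1 p hp0 (fun ω => (w ω, G ω))
      (fun ω => (res (Finset.univ.erase k) W ω, A P' n ω, Q P' n ω))
      (fun ω => (w ω, A P' n ω, Q P' n ω)) (fun ω => (res (Finset.univ.erase k) W ω, G ω))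
      (by intro ω ω'; simp only [Prod.mk.injEq]; tauto)
      (by intro ω ω'; simp only [Prod.mk.injEq, res_iff]; simp only [hw, funext_iff]; clear * -; grind [Finset.mem_compl])
      (by intro ω ω'; simp only [Prod.mk.injEq, res_iff, hG]; simp only [funext_iff]; clear * -; grind [Finset.mem_compl])
    have s2 := ent_mono q hq1 p hp0
      (fun ω => ((fun (k : {x : Fin K // x ∈ P'ᶜ}) => W k.1 ω), G ω)) (fun ω => (w ω, G ω))
      (by intro ω ω'; simp only [Prod.mk.injEq]; simp only [hw, funext_iff]; clear * -; grind [Finset.mem_compl])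
    have s3 := ent_mono q hq1 p hp0 (res P'ᶜ W)
      (fun ω (k : {x : Fin K // x ∈ P'ᶜ}) => W k.1 ω)
      (by intro ω ω'; simp only [res_iff]; simp only [funext_iff, Subtype.forall]; clear * -; grind [Finset.mem_compl])
    have s4 := hlo P'ᶜ
    have s5 := sub3 q hq1 p hp0 hp1 (fun ω => (res (Finset.univ.erase k) W ω, G ω))
      (res (P'ᶜ.erase k) W) (fun ω => (res P' W ω, G ω))
      (by intro ω ω'; simp only [Prod.mk.injEq, res_iff]; clear * -; grind [Finset.mem_compl])
    have s6 := hup (P'ᶜ.erase k)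
    have s7 := sub4 q hq1 p hp0 (fun ω => (res P' W ω, G ω))
      (fun ω => ((fun n : Fin N => A P' n ω), F ω))
      (fun ω => ((fun (k : {x : Fin K // x ∈ P'}) => W k.1 ω),
        ((fun n : Fin N => A P' n ω), F ω))) G
      (by intro ω ω'; simp only [Prod.mk.injEq, res_iff]; simp only [funext_iff, Subtype.forall]; clear * -; grind [Finset.mem_compl])
      (by intro ω ω'; simp only [Prod.mk.injEq]; tauto)
      (by intro ω ω'; simp only [Prod.mk.injEq, hG]; tauto)
    have c : ((P'ᶜ.erase k).card : ℝ) = (P'ᶜ.card : ℝ) - 1 := by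
      have := Finset.card_erase_add_one (s := P'ᶜ) (a := k) (by simpa using hk)
      rw [← this]; push_cast; ring
    rw [c] at s6
    linarith
  -- hence all messages together are independent of one answer
  have hI : ∀ n : Fin N, ent q p w + ent q p (fun ω => (A P₀ n ω, Q P₀ n ω)) ≤
      ent q p (fun ω => (w ω, A P₀ n ω, Q P₀ n ω)) := by
    intro n
    have claim : ∀ T : Finset (Fin K),
        (T.card : ℝ) * L + ent q p (fun ω => (A P₀ n ω, Q P₀ n ω)) ≤
        ent q p (fun ω => (res T W ω, A P₀ n ω, Q P₀ n ω)) := by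
      intro T
      induction T using Finset.induction_on with
      | empty =>
        have := ent_mono q hq1 p hp0 (fun ω => (A P₀ n ω, Q P₀ n ω))
          (fun ω => (res ∅ W ω, A P₀ n ω, Q P₀ n ω)) (by
            intro ω ω'; simp only [Prod.mk.injEq]; tauto)
        simpa using this
      | insert k T hk ih =>
        have h1 := sub4 q hq1 p hp0 (fun ω => (w ω, A P₀ n ω, Q P₀ n ω))
          (fun ω => (res T W ω, A P₀ n ω, Q P₀ n ω))
          (fun ω => (res (insert k T) W ω, A P₀ n ω, Q P₀ n ω))
          (fun ω => (res (Finset.univ.erase k) W ω, A P₀ n ω, Q P₀ n ω))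
          (by intro ω ω'; simp only [Prod.mk.injEq, res_iff]; simp only [hw, funext_iff]; clear * -; grind [Finset.mem_compl])
          (by intro ω ω'; simp only [Prod.mk.injEq, res_iff]; clear * -; grind [Finset.mem_compl])
          (by intro ω ω'; simp only [Prod.mk.injEq, res_iff]; clear * - hk; grind [Finset.mem_compl])
        have h2 := hD n k
        rw [Finset.card_insert_of_notMem hk]
        push_cast
        linarith
    have h1 := claim Finset.univ
    have h2 := ent_mono q hq1 p hp0 (fun ω => (res Finset.univ W ω, A P₀ n ω, Q P₀ n ω))
      (fun ω => (w ω, A P₀ n ω, Q P₀ n ω))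
      (by intro ω ω'; simp only [Prod.mk.injEq, res_iff]; simp only [hw, funext_iff]; clear * -; grind [Finset.mem_compl])
    rw [Finset.card_univ, Fintype.card_fin] at h1
    rw [hWall]
    linarith
  have hQ := hQdet P₀ hP₀
  have hR := hrel P₀ hP₀
  unfold cent at hQ hR
  -- one answer given the messages and the user randomness
  have hE : ∀ n : Fin N, ent q p (fun ω => (A P₀ n ω, F ω)) - ent q p F + ent q p (fun ω => (w ω, F ω))
      ≤ ent q p (fun ω => (A P₀ n ω, w ω, F ω)) := by
    intro n
    have hA := hAdet P₀ hP₀ n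
    unfold cent at hA
    have hqF := ent_mono q hq1 p hp0 (fun ω => (Q P₀ n ω, F ω))
      (fun ω => ((fun n : Fin N => Q P₀ n ω), F ω))
      (by intro ω ω'; simp only [Prod.mk.injEq]; simp only [funext_iff]; clear * -; grind [Finset.mem_compl])
    have t1 := sub4 q hq1 p hp0 (fun ω => (F ω, S ω, w ω))
      (fun ω => (w ω, A P₀ n ω, Q P₀ n ω))
      (fun ω => (A P₀ n ω, Q P₀ n ω, w ω, F ω))
      (fun ω => (A P₀ n ω, (Q P₀ n ω, w ω, S ω)))
      (by intro ω ω'; simp only [Prod.mk.injEq]; tauto)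
      (by intro ω ω'; simp only [Prod.mk.injEq]; tauto)
      (by intro ω ω'; simp only [Prod.mk.injEq]; tauto)
    have t2 := sub4 q hq1 p hp0 (fun ω => (A P₀ n ω, Q P₀ n ω, w ω, F ω)) F
      (fun ω => (A P₀ n ω, w ω, F ω)) (fun ω => (Q P₀ n ω, F ω))
      (by intro ω ω'; simp only [Prod.mk.injEq]; tauto)
      (by intro ω ω'; simp only [Prod.mk.injEq]; tauto)
      (by intro ω ω'; simp only [Prod.mk.injEq]; tauto)
    have t3 := sub3 q hq1 p hp0 hp1 (fun ω => (Q P₀ n ω, w ω, S ω)) (Q P₀ n)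
      (fun ω => (w ω, S ω))
      (by intro ω ω'; simp only [Prod.mk.injEq]; tauto)
    have t4 := sub3 q hq1 p hp0 hp1 (fun ω => (w ω, S ω)) w S
      (by intro ω ω'; simp only [Prod.mk.injEq]; tauto)
    have t5 := sub3 q hq1 p hp0 hp1 (fun ω => (w ω, F ω)) w F
      (by intro ω ω'; simp only [Prod.mk.injEq]; tauto)
    have t6 := sub4 q hq1 p hp0 (fun ω => (A P₀ n ω, F ω)) (Q P₀ n)
      (fun ω => (A P₀ n ω, Q P₀ n ω)) (fun ω => (Q P₀ n ω, F ω))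
      (by intro ω ω'; simp only [Prod.mk.injEq]; tauto)
      (by intro ω ω'; simp only [Prod.mk.injEq]; tauto)
      (by intro ω ω'; simp only [Prod.mk.injEq]; tauto)
    have t7 := hI n
    linarith
  have hF : ∀ n : Fin N, (P : ℝ) * L + ent q p (fun ω => (A P₀ n ω, F ω)) ≤
      ent q p (fun ω => ((fun n : Fin N => A P₀ n ω), F ω)) := by
    intro n
    have u1 := sub4 q hq1 p hp0 (fun ω => (A P₀ n ω, w ω, F ω)) (fun ω => (res P₀ W ω, F ω))
      (fun ω => ((fun (k : {x : Fin K // x ∈ P₀}) => W k.1 ω),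
        ((fun n : Fin N => A P₀ n ω), F ω)))
      (fun ω => (w ω, F ω))
      (by intro ω ω'; simp only [Prod.mk.injEq]; simp only [funext_iff, Subtype.forall]; clear * -; grind [Finset.mem_compl])
      (by intro ω ω'; simp only [Prod.mk.injEq, res_iff]; simp only [funext_iff, Subtype.forall]; clear * -; grind [Finset.mem_compl])
      (by intro ω ω'; simp only [Prod.mk.injEq, res_iff]; simp only [hw, funext_iff]; clear * -; grind [Finset.mem_compl])
    have u2 := sub3 q hq1 p hp0 hp1 (fun ω => (w ω, F ω)) (fun ω => (res P₀ W ω, F ω))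
      (res P₀ᶜ W)
      (by intro ω ω'; simp only [Prod.mk.injEq, res_iff]; simp only [hw, funext_iff]; clear * -; grind [Finset.mem_compl])
    have u3 := hup P₀ᶜ
    rw [hcompl, hP₀] at u3
    have u4 := sub3 q hq1 p hp0 hp1 (fun ω => (F ω, S ω, w ω)) (fun ω => (w ω, F ω)) S
      (by intro ω ω'; simp only [Prod.mk.injEq]; tauto)
    have u5 := hE n
    linarith
  have hsum : ∀ T : Finset (Fin N), ent q p (fun ω => (res T (A P₀) ω, F ω)) - ent q p F ≤
      ∑ n ∈ T, (ent q p (fun ω => (A P₀ n ω, F ω)) - ent q p F) := by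
    intro T
    induction T using Finset.induction_on with
    | empty =>
      have := ent_mono q hq1 p hp0 (fun ω => (res ∅ (A P₀) ω, F ω)) F (by
        intro ω ω'; simp [res_iff])
      simpa using this
    | insert n T hn ih =>
      have := sub4 q hq1 p hp0 (fun ω => (res (insert n T) (A P₀) ω, F ω)) F
        (fun ω => (res T (A P₀) ω, F ω)) (fun ω => (A P₀ n ω, F ω))
        (by intro ω ω'; simp only [Prod.mk.injEq, res_iff]; clear * -; grind [Finset.mem_compl])
        (by intro ω ω'; simp only [Prod.mk.injEq]; tauto)
        (by intro ω ω'; simp only [Prod.mk.injEq]; tauto)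
      rw [Finset.sum_insert hn]
      linarith
  have hs := hsum Finset.univ
  have hm := ent_mono q hq1 p hp0 (fun ω => ((fun n : Fin N => A P₀ n ω), F ω))
    (fun ω => (res Finset.univ (A P₀) ω, F ω))
    (by intro ω ω'; simp only [Prod.mk.injEq, res_iff]; simp only [funext_iff]; clear * -; grind [Finset.mem_compl])
  have hb : ∑ n : Fin N, (ent q p (fun ω => (A P₀ n ω, F ω)) - ent q p F) ≤
      ∑ _n : Fin N, (ent q p (fun ω => ((fun n : Fin N => A P₀ n ω), F ω)) - ent q p F
        - (P : ℝ) * L) :=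
    Finset.sum_le_sum fun n _ => by linarith [hF n]
  rw [Finset.sum_const, Finset.card_univ, Fintype.card_fin, nsmul_eq_mul] at hb
  unfold cent
  linarith

end MMSPIR
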